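/- Let Γ be a strongly connected digraphon on a probability space (Ω,μ) with peripheral multiplicity D. Then the partition Ω = P₀ ⊔ P₁ ⊔ … ⊔ P_{D−1} witnessing graphical D-periodicity is unique up to a cyclic shift: if Ω = Q₀ ⊔ Q₁ ⊔ … ⊔ Q_{D−1} is another measurable partition witnessing graphical D-periodicity, then there exists s ∈ ℤ such that for all i,j ∈ {0,…,D−1}, P_i equals Q_j up to a μ-null set if and only if i ≡ j + s (mod D). -/

import Mathlib

/-!
A witness of `d`-periodicity is the same as a phase function `Ω → ZMod d` that increases by one
along almost every edge. The difference of two phase functions is invariant along almost every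
edge, so strong connectivity makes it almost everywhere equal to a constant, which is the shift.

That no other shift matches the classes amounts to every class being non-null. If there is an edge,
the residues of the non-null classes are closed under `+ 1`, since a class whose successor is null
would be forward invariant, hence conull, leaving no edges. They are also closed under `- 1`,
since the class of `j` is reached again from that of `j + 1`, so they exhaust `ZMod d`. If there
is no edge, the only eigenvalue is `0`, so the peripheral multiplicity is `1` and there is a single
class.
-/

open MeasureTheory Filter Set Topology
open scoped ENNReal Real Function

namespace Digraphon

variable {Ω : Type*} [MeasurableSpace Ω]

/-- `kpowAux μ Γ n` is the `(n+1)`-st kernel power of `Γ`. -/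
noncomputable def kpowAux (μ : Measure Ω) (Γ : Ω → Ω → ℝ) : ℕ → Ω → Ω → ℝ
  | 0 => Γ
  | n + 1 => fun x y => ∫ z, Γ x z * kpowAux μ Γ n z y ∂μ

/-- `dpow μ Γ k` is the `k`-th kernel power of `Γ` (intended for `k ≥ 1`). -/
noncomputable def dpow (μ : Measure Ω) (Γ : Ω → Ω → ℝ) (k : ℕ) : Ω → Ω → ℝ :=
  kpowAux μ Γ (k - 1)

noncomputable def kpowAuxC (μ : Measure Ω) (Γ : Ω → Ω → ℂ) : ℕ → Ω → Ω → ℂ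
  | 0 => Γ
  | n + 1 => fun x y => ∫ z, Γ x z * kpowAuxC μ Γ n z y ∂μ

noncomputable def dpowC (μ : Measure Ω) (Γ : Ω → Ω → ℂ) (k : ℕ) : Ω → Ω → ℂ :=
  kpowAuxC μ Γ (k - 1)

/-- The set of points reachable from `x`. -/
def ReachOut (μ : Measure Ω) (Γ : Ω → Ω → ℝ) (x : Ω) : Set Ω :=
  {z | ∃ k : ℕ, 1 ≤ k ∧ 0 < dpow μ Γ k x z}

/-- The reachability sequence from `x` to `y`. -/
def reachSeq (μ : Measure Ω) (Γ : Ω → Ω → ℝ) (x y : Ω) : Set ℕ :=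
  {k : ℕ | 1 ≤ k ∧ 0 < dpow μ Γ k x y}

/-- A digraphon: a measurable kernel with values in `[0,1]`. -/
def IsDigraphon (Γ : Ω → Ω → ℝ) : Prop :=
  Measurable (Function.uncurry Γ) ∧ ∀ x y, Γ x y ∈ Set.Icc (0 : ℝ) 1

/-- `X` is strongly connected in `Γ`. -/
def StronglyConnectedIn (μ : Measure Ω) (Γ : Ω → Ω → ℝ) (X : Set Ω) : Prop :=
  MeasurableSet X ∧ 0 < μ X ∧
    ∀ A B : Set Ω, MeasurableSet A → MeasurableSet B → A ∪ B = X → Disjoint A B →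
      0 < μ A → 0 < μ B → 0 < ∫ x in A, ∫ y in B, Γ x y ∂μ ∂μ

/-- `X` is a strong component in `Γ`. -/
def StrongComponent (μ : Measure Ω) (Γ : Ω → Ω → ℝ) (X : Set Ω) : Prop :=
  StronglyConnectedIn μ Γ X ∧
    ∀ Y : Set Ω, MeasurableSet Y → 0 < μ (X ∩ Y) → 0 < μ (Y \ X) →
      ¬ StronglyConnectedIn μ Γ Y

/-- `X` is fragmented in `Γ`. -/
def Fragmented (μ : Measure Ω) (Γ : Ω → Ω → ℝ) (X : Set Ω) : Prop :=
  ∀ Y : Set Ω, Y ⊆ X → MeasurableSet Y → ¬ StronglyConnectedIn μ Γ Y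

/-- `τ` is an eigenvalue of the integral kernel operator of `Γ` on `L²(Ω;ℂ)`. -/
def IsEigenvalue (μ : Measure Ω) (Γ : Ω → Ω → ℝ) (τ : ℂ) : Prop :=
  ∃ f : Ω → ℂ, MemLp f 2 μ ∧ ¬(f =ᵐ[μ] 0) ∧
    ∀ᵐ x ∂μ, ∫ y, f y * (Γ y x : ℂ) ∂μ = τ * f x

/-- The spectral radius of `Γ` (`0` if there are no eigenvalues). -/
noncomputable def specRad (μ : Measure Ω) (Γ : Ω → Ω → ℝ) : ℝ :=
  sSup (insert 0 {r : ℝ | ∃ τ : ℂ, IsEigenvalue μ Γ τ ∧ ‖τ‖ = r})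

/-- The number of eigenvalues of modulus `specRad μ Γ`. -/
noncomputable def periphMult (μ : Measure Ω) (Γ : Ω → Ω → ℝ) : ℕ :=
  {τ : ℂ | IsEigenvalue μ Γ τ ∧ ‖τ‖ = specRad μ Γ}.ncard

/-- `P : ZMod d → Set Ω` witnesses graphical `d`-periodicity of `Γ`. -/
def IsPeriodicityWitness (μ : Measure Ω) (Γ : Ω → Ω → ℝ) {d : ℕ} (P : ZMod d → Set Ω) : Prop :=
  (∀ j, MeasurableSet (P j)) ∧ Pairwise (Disjoint on P) ∧ (⋃ j, P j) = Set.univ ∧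
    ∀ j : ZMod d, (μ.prod μ) {p : Ω × Ω | p.1 ∈ P j ∧ p.2 ∉ P (j + 1) ∧ Γ p.1 p.2 ≠ 0} = 0

/-- `Γ` is graphically `d`-periodic. -/
def GraphPeriodic (μ : Measure Ω) (Γ : Ω → Ω → ℝ) (d : ℕ) : Prop :=
  ∃ P : ZMod d → Set Ω, IsPeriodicityWitness μ Γ P

/-- `Γ` is aperiodic. -/
def Aperiodic (μ : Measure Ω) (Γ : Ω → Ω → ℝ) : Prop :=
  ∀ d : ℕ, 1 ≤ d → GraphPeriodic μ Γ d → d = 1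

/-- `S ⊆ ℕ` is eventually `D`-periodic with shift `s`. -/
def EvPeriodic (D : ℕ) (s : ℤ) (S : Set ℕ) : Prop :=
  (∀ n ∈ S, (D : ℤ) ∣ ((n : ℤ) - s)) ∧
    ∃ k : ℕ, ∀ n : ℕ, k ≤ n → (((D : ℤ) ∣ ((n : ℤ) - s)) ↔ n ∈ S)

/-- The homomorphism density `t(C_k, Γ)` of the directed `k`-cycle. -/
noncomputable def cycleDensity (μ : Measure Ω) (Γ : Ω → Ω → ℝ) (k : ℕ) : ℝ :=
  ∫ x : Fin k → Ω, ∏ i : Fin k, Γ (x i) (x (finRotate k i)) ∂(Measure.pi fun _ => μ)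

/-- `Γ⟦A⟧` : the kernel equal to `Γ` on `A × A` and `0` elsewhere. -/
noncomputable def kerRestrict (Γ : Ω → Ω → ℝ) (A : Set Ω) : Ω → Ω → ℝ :=
  fun x y => (A ×ˢ A).indicator (Function.uncurry Γ) (x, y)

/-- Equality of sets modulo a `μ`-nullset. -/
def AEEqSet (μ : Measure Ω) (A B : Set Ω) : Prop := μ ((A \ B) ∪ (B \ A)) = 0

/-- The normalized restriction of `μ` to `A`, as a measure on `↥A`. -/
noncomputable def subMeasure (μ : Measure Ω) (A : Set Ω) : Measure ↥A :=
  (μ A)⁻¹ • Measure.comap Subtype.val μ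

/-- The restriction of a kernel to `A × A`, as a kernel on `↥A`. -/
def subKernel (Γ : Ω → Ω → ℝ) (A : Set Ω) : ↥A → ↥A → ℝ :=
  fun a b => Γ ↑a ↑b

/-- A finite oriented graph: no pair of antiparallel edges (in particular no loops). -/
structure OrientedGraph where
  n : ℕ
  E : Finset (Fin n × Fin n)
  no_anti : ∀ e ∈ E, (e.2, e.1) ∉ E

/-- The homomorphism density `t(D, Γ)` of an oriented graph `D`. -/
noncomputable def homDensity (μ : Measure Ω) (Γ : Ω → Ω → ℝ) (D : OrientedGraph) : ℝ :=
  ∫ x : Fin D.n → Ω, ∏ e ∈ D.E, Γ (x e.1) (x e.2) ∂(Measure.pi fun _ => μ)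

/-- The cut norm distance of two kernels. -/
noncomputable def cutNormDist (μ : Measure Ω) (U W : Ω → Ω → ℝ) : ℝ :=
  sSup {r : ℝ | ∃ S T : Set Ω, MeasurableSet S ∧ MeasurableSet T ∧
    r = |∫ x in S, ∫ y in T, (U x y - W x y) ∂μ ∂μ|}

/-- The cut distance of two kernels. -/
noncomputable def cutDist (μ : Measure Ω) (U W : Ω → Ω → ℝ) : ℝ :=
  sInf {r : ℝ | ∃ e : Ω ≃ᵐ Ω, MeasurePreserving e μ μ ∧
    r = cutNormDist μ U (fun x y => W (e x) (e y))}

section ForwardInvariant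

/-- A set that almost no edge of `Γ` leaves; the measure-theoretic analogue of a set of vertices
closed under out-neighbours. -/
def IsForwardInvariant (μ : Measure Ω) (Γ : Ω → Ω → ℝ) (A : Set Ω) : Prop :=
  ∀ᵐ p ∂μ.prod μ, Γ p.1 p.2 ≠ 0 → p.1 ∈ A → p.2 ∈ A

variable {μ : Measure Ω} [SFinite μ] {Γ : Ω → Ω → ℝ}

theorem IsForwardInvariant.setIntegral_compl_eq_zero {A : Set Ω}
    (hinv : IsForwardInvariant μ Γ A) : ∫ x in A, ∫ y in Aᶜ, Γ x y ∂μ ∂μ = 0 := by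
  refine setIntegral_eq_zero_of_ae_eq_zero ?_
  filter_upwards [Measure.ae_ae_of_ae_prod hinv] with x hx hxA
  refine setIntegral_eq_zero_of_ae_eq_zero ?_
  filter_upwards [hx] with y hy hyA
  by_contra hxy
  exact hyA (hy hxy hxA)

theorem StronglyConnectedIn.ae_mem_or_ae_notMem (hconn : StronglyConnectedIn μ Γ univ)
    {A : Set Ω} (hA : MeasurableSet A) (hinv : IsForwardInvariant μ Γ A) :
    (∀ᵐ x ∂μ, x ∈ A) ∨ ∀ᵐ x ∂μ, x ∉ A := by
  by_contra! h
  have hAc_pos : 0 < μ Aᶜ := pos_iff_ne_zero.2 (frequently_ae_mem_iff.1 h.1)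
  have hA_pos : 0 < μ A := pos_iff_ne_zero.2 (frequently_ae_mem_iff.1 h.2)
  exact (hconn.2.2 A Aᶜ hA hA.compl (union_compl_self A) disjoint_compl_right hA_pos hAc_pos).ne'
    hinv.setIntegral_compl_eq_zero

theorem StronglyConnectedIn.ae_mem_of_frequently_mem (hconn : StronglyConnectedIn μ Γ univ)
    {A : Set Ω} (hA : MeasurableSet A) (hinv : IsForwardInvariant μ Γ A)
    (hfreq : ∃ᵐ x ∂μ, x ∈ A) : ∀ᵐ x ∂μ, x ∈ A :=
  (hconn.ae_mem_or_ae_notMem hA hinv).resolve_right hfreq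

theorem StronglyConnectedIn.exists_ae_eq_const {β : Type*} [Nonempty β] [MeasurableSpace β]
    [MeasurableSpace.CountablySeparated β] (hconn : StronglyConnectedIn μ Γ univ) {f : Ω → β}
    (hf : Measurable f) (hedge : ∀ᵐ p ∂μ.prod μ, Γ p.1 p.2 ≠ 0 → f p.2 = f p.1) :
    ∃ b, f =ᵐ[μ] Function.const Ω b := by
  refine exists_eventuallyEq_const_of_forall_separating MeasurableSet fun U hU => ?_
  refine hconn.ae_mem_or_ae_notMem (A := f ⁻¹' U) (hf hU) ?_
  filter_upwards [hedge] with p hp hne hpU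
  rwa [mem_preimage, hp hne]

end ForwardInvariant

section Phase

instance countable_zmod (d : ℕ) : Countable (ZMod d) :=
  ZMod.intCast_surjective.countable

/-- A labelling of the points by residues mod `d` that increases by one along almost every edge.
The fibres of a phase function are the classes of a `d`-periodicity witness, in cyclic order. -/
structure IsPhase (μ : Measure Ω) (Γ : Ω → Ω → ℝ) {d : ℕ} (c : Ω → ZMod d) : Prop where
  measurable : Measurable c
  ae_edge : ∀ᵐ p ∂μ.prod μ, Γ p.1 p.2 ≠ 0 → c p.2 = c p.1 + 1

variable {μ : Measure Ω} {Γ : Ω → Ω → ℝ} {d : ℕ}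

theorem IsPeriodicityWitness.exists_isPhase {P : ZMod d → Set Ω}
    (hP : IsPeriodicityWitness μ Γ P) :
    ∃ c : Ω → ZMod d, IsPhase μ Γ c ∧ ∀ i, P i = c ⁻¹' {i} := by
  obtain ⟨hmeas, hdisj, hcover, hedge⟩ := hP
  choose c hc using fun x => mem_iUnion.1 (hcover ▸ mem_univ x)
  have mem_iff (x : Ω) (i : ZMod d) : x ∈ P i ↔ c x = i :=
    ⟨fun hx => hdisj.eq (not_disjoint_iff.2 ⟨x, hc x, hx⟩), fun h => h ▸ hc x⟩
  have fibre (i : ZMod d) : P i = c ⁻¹' {i} := ext fun x => mem_iff x i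
  refine ⟨c, ⟨measurable_to_countable' fun i => fibre i ▸ hmeas i, ?_⟩, fibre⟩
  filter_upwards [ae_all_iff.2 fun j => measure_eq_zero_iff_ae_notMem.1 (hedge j)] with p hp hne
  by_contra hstep
  exact hp (c p.1) ⟨hc p.1, fun h => hstep ((mem_iff _ _).1 h), hne⟩

theorem IsPhase.isForwardInvariant_preimage {c : Ω → ZMod d} (hc : IsPhase μ Γ c)
    {I : Set (ZMod d)} (hI : ∀ i ∈ I, i + 1 ∈ I) : IsForwardInvariant μ Γ (c ⁻¹' I) := by
  filter_upwards [hc.ae_edge] with p hp hne hpI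
  rw [mem_preimage, hp hne]
  exact hI _ hpI

variable [SFinite μ]

theorem IsPhase.exists_ae_sub_eq {c c' : Ω → ZMod d} (hconn : StronglyConnectedIn μ Γ univ)
    (hc : IsPhase μ Γ c) (hc' : IsPhase μ Γ c') : ∃ s, ∀ᵐ x ∂μ, c x - c' x = s := by
  refine hconn.exists_ae_eq_const (f := fun x => c x - c' x) ?_ ?_
  · exact (Measurable.of_discrete (f := fun z : ZMod d × ZMod d => z.1 - z.2)).comp
      (hc.measurable.prodMk hc'.measurable)
  · filter_upwards [hc.ae_edge, hc'.ae_edge] with p hp hp' hne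
    rw [hp hne, hp' hne, add_sub_add_right_eq_sub]

theorem IsPhase.frequently_eq_add_one {c : Ω → ZMod d} (hconn : StronglyConnectedIn μ Γ univ)
    (hc : IsPhase μ Γ c) (hΓ : ∃ᵐ p ∂μ.prod μ, Γ p.1 p.2 ≠ 0) {j : ZMod d}
    (hj : ∃ᵐ x ∂μ, c x = j) : ∃ᵐ x ∂μ, c x = j + 1 := by
  intro hnext
  have no_out_edge : ∀ᵐ p ∂μ.prod μ, Γ p.1 p.2 ≠ 0 → c p.1 ≠ j := by
    filter_upwards [hc.ae_edge, Measure.quasiMeasurePreserving_snd.ae hnext] with p hp hp2 hne hp1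
    exact hp2 (by rw [hp hne, hp1])
  have hall : ∀ᵐ x ∂μ, x ∈ c ⁻¹' {j} :=
    hconn.ae_mem_of_frequently_mem (hc.measurable (measurableSet_singleton j))
      (no_out_edge.mono fun p hp hne hpj => absurd hpj (hp hne)) hj
  refine hΓ ?_
  filter_upwards [no_out_edge, Measure.quasiMeasurePreserving_fst.ae hall] with p hp hpj hne
  exact hp hne hpj

theorem IsPhase.exists_natCast_add_eq {c : Ω → ZMod d} (hconn : StronglyConnectedIn μ Γ univ)
    (hc : IsPhase μ Γ c) {i j : ZMod d} (hi : ∃ᵐ x ∂μ, c x = i) (hj : ∃ᵐ x ∂μ, c x = j) :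
    ∃ n : ℕ, j + n = i := by
  let I : Set (ZMod d) := range fun n : ℕ => j + n
  have hI : ∀ k ∈ I, k + 1 ∈ I := by
    rintro _ ⟨n, rfl⟩
    exact ⟨n + 1, by push_cast; ring⟩
  have hall : ∀ᵐ x ∂μ, x ∈ c ⁻¹' I :=
    hconn.ae_mem_of_frequently_mem (hc.measurable .of_discrete)
      (hc.isForwardInvariant_preimage hI) (hj.mono fun x hx => ⟨0, by simp [hx]⟩)
  obtain ⟨x, rfl, hx⟩ := (hi.and_eventually hall).exists
  exact hx

theorem IsPhase.frequently_eq_sub_one {c : Ω → ZMod d} (hconn : StronglyConnectedIn μ Γ univ)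
    (hc : IsPhase μ Γ c) (hΓ : ∃ᵐ p ∂μ.prod μ, Γ p.1 p.2 ≠ 0) {j : ZMod d}
    (hj : ∃ᵐ x ∂μ, c x = j) : ∃ᵐ x ∂μ, c x = j - 1 := by
  have hshift (n : ℕ) : ∃ᵐ x ∂μ, c x = j + n := by
    induction n with
    | zero => simpa using hj
    | succ n ih => simpa [add_assoc] using hc.frequently_eq_add_one hconn hΓ ih
  obtain ⟨n, hreturn⟩ := hc.exists_natCast_add_eq hconn hj (hc.frequently_eq_add_one hconn hΓ hj)
  have hpred : j - 1 = j + n := by linear_combination -hreturn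
  exact hpred ▸ hshift n

theorem IsPhase.frequently_eq {c : Ω → ZMod d} (hconn : StronglyConnectedIn μ Γ univ)
    (hc : IsPhase μ Γ c) (hΓ : d ≠ 1 → ∃ᵐ p ∂μ.prod μ, Γ p.1 p.2 ≠ 0) (i : ZMod d) :
    ∃ᵐ x ∂μ, c x = i := by
  have : NeZero μ := ⟨fun h => by simpa [h] using hconn.2.1⟩
  obtain ⟨j, hj⟩ : ∃ j, ∃ᵐ x ∂μ, c x = j := by
    by_contra! h
    obtain ⟨x, hx⟩ := (ae_all_iff.2 fun j => h j).exists
    exact hx (c x) rfl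
  obtain rfl | hd := eq_or_ne d 1
  · rwa [Subsingleton.elim i j]
  obtain ⟨n, rfl⟩ : ∃ n : ℤ, j + n = i :=
    (ZMod.intCast_surjective (i - j)).imp fun n hn => by rw [hn, add_sub_cancel]
  induction n with
  | zero => simpa using hj
  | succ n ih => simpa [add_assoc] using hc.frequently_eq_add_one hconn (hΓ hd) ih
  | pred n ih => simpa [add_sub_assoc] using hc.frequently_eq_sub_one hconn (hΓ hd) ih

end Phase

section Eigenvalue

variable {μ : Measure Ω} {Γ : Ω → Ω → ℝ}

theorem ae_integral_mul_eq_zero_of_ae_eq_zero [SFinite μ]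
    (hΓ : ∀ᵐ p ∂μ.prod μ, Γ p.1 p.2 = 0) (f : Ω → ℂ) :
    ∀ᵐ x ∂μ, ∫ y, f y * (Γ y x : ℂ) ∂μ = 0 := by
  have hswap : ∀ᵐ p ∂μ.prod μ, Γ p.2 p.1 = 0 :=
    Measure.measurePreserving_swap.quasiMeasurePreserving.ae hΓ
  filter_upwards [Measure.ae_ae_of_ae_prod hswap] with x hx
  refine integral_eq_zero_of_ae ?_
  filter_upwards [hx] with y hy
  simp [hy]

variable [IsFiniteMeasure μ] [NeZero μ]

theorem isEigenvalue_iff_eq_zero_of_ae_eq_zero (hΓ : ∀ᵐ p ∂μ.prod μ, Γ p.1 p.2 = 0) {τ : ℂ} :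
    IsEigenvalue μ Γ τ ↔ τ = 0 := by
  constructor
  · rintro ⟨f, -, hf_ne, hf⟩
    by_contra hτ
    refine hf_ne ?_
    filter_upwards [hf, ae_integral_mul_eq_zero_of_ae_eq_zero hΓ f] with x hx hx0
    exact (mul_eq_zero.1 (hx.symm.trans hx0)).resolve_left hτ
  · rintro rfl
    refine ⟨1, memLp_const 1, fun h => one_ne_zero h.exists.choose_spec, ?_⟩
    simpa only [zero_mul] using ae_integral_mul_eq_zero_of_ae_eq_zero hΓ 1

theorem specRad_eq_zero_of_ae_eq_zero (hΓ : ∀ᵐ p ∂μ.prod μ, Γ p.1 p.2 = 0) : specRad μ Γ = 0 := by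
  simp [specRad, isEigenvalue_iff_eq_zero_of_ae_eq_zero hΓ]

theorem periphMult_eq_one_of_ae_eq_zero (hΓ : ∀ᵐ p ∂μ.prod μ, Γ p.1 p.2 = 0) :
    periphMult μ Γ = 1 := by
  have hset : {τ : ℂ | IsEigenvalue μ Γ τ ∧ ‖τ‖ = specRad μ Γ} = {0} := by
    ext τ
    simp [isEigenvalue_iff_eq_zero_of_ae_eq_zero hΓ, specRad_eq_zero_of_ae_eq_zero hΓ]
  rw [periphMult, hset, ncard_singleton]

end Eigenvalue

theorem aeEqSet_iff {μ : Measure Ω} {A B : Set Ω} :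
    AEEqSet μ A B ↔ ∀ᵐ x ∂μ, x ∈ A ↔ x ∈ B :=
  measure_symmDiff_eq_zero_iff.trans eventuallyEq_set

theorem periodicity_witness_unique_up_to_cyclic_shift_general {μ : Measure Ω} [SFinite μ]
    {Γ : Ω → Ω → ℝ} (hconn : StronglyConnectedIn μ Γ univ) {d : ℕ}
    (hd : d ≠ 1 → ∃ᵐ p ∂μ.prod μ, Γ p.1 p.2 ≠ 0) {P Q : ZMod d → Set Ω}
    (hP : IsPeriodicityWitness μ Γ P) (hQ : IsPeriodicityWitness μ Γ Q) :
    ∃ s : ℤ, ∀ i j : ZMod d, AEEqSet μ (P i) (Q j) ↔ i = j + (s : ZMod d) := by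
  obtain ⟨p, hp, hPp⟩ := hP.exists_isPhase
  obtain ⟨q, hq, hQq⟩ := hQ.exists_isPhase
  obtain ⟨t, ht⟩ := hp.exists_ae_sub_eq hconn hq
  obtain ⟨s, rfl⟩ := ZMod.intCast_surjective t
  refine ⟨s, fun i j => ?_⟩
  simp only [aeEqSet_iff, hPp, hQq, mem_preimage, mem_singleton_iff]
  constructor
  · intro h
    obtain ⟨x, hpi, hiff, hdiff⟩ := ((hp.frequently_eq hconn hd i).and_eventually (h.and ht)).exists
    rw [← hpi, ← hiff.1 hpi, ← hdiff, add_sub_cancel]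
  · rintro rfl
    filter_upwards [ht] with x hx
    rw [← hx, ← sub_eq_iff_eq_add, sub_sub_cancel]

/-- For a strongly connected digraphon of peripheral multiplicity `D`, the
partition witnessing graphical `D`-periodicity is unique up to a cyclic shift. -/
theorem periodicity_witness_unique_up_to_cyclic_shift
    {Ω : Type*} [MeasurableSpace Ω] (μ : Measure Ω) [IsProbabilityMeasure μ]
    (Γ : Ω → Ω → ℝ) (hΓ : IsDigraphon Γ)
    (hconn : StronglyConnectedIn μ Γ Set.univ)
    (D : ℕ) (hD : periphMult μ Γ = D)
    (P Q : ZMod D → Set Ω)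
    (hP : IsPeriodicityWitness μ Γ P) (hQ : IsPeriodicityWitness μ Γ Q) :
    ∃ s : ℤ, ∀ i j : ZMod D, (AEEqSet μ (P i) (Q j) ↔ i = j + (s : ZMod D)) :=
  periodicity_witness_unique_up_to_cyclic_shift_general hconn (fun hD_ne_one hΓ_zero =>
    hD_ne_one (hD ▸ periphMult_eq_one_of_ae_eq_zero (hΓ_zero.mono fun _ => not_not.1))) hP hQ

end Digraphon
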